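/- arXiv:2602.12901 — 3 statements merged into one kernel-verified Lean document; each statement's English description precedes it below -/
import Mathlib

section
/- Let d ≥ 1 and work in ℝ^d with the Euclidean inner product and norm. Let θ* , θ̃ ∈ ℝ^d with ‖θ*‖ = 1, let 0 ≤ α < 1 and 0 ≤ γ ≤ 1, and suppose ‖θ̃ − θ*‖ ≤ α (so θ̃ ≠ 0). If x ∈ ℝ^d satisfies ‖x‖ ≤ 1 and x is γ-good for θ̃, then ‖θ* − x‖ ≤ √(2 + 2α√(1−γ²) − 2γ√(1−α²)). -/
open scoped RealInnerProductSpace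

/-- A γ-good arm for an α-accurate estimate of a unit objective vector lies within
distance √(2 + 2α√(1−γ²) − 2γ√(1−α²)) of the true objective vector. -/
theorem dist_good_arm (d : ℕ) (hd : 1 ≤ d)
    (θstar θtil x : EuclideanSpace ℝ (Fin d)) (α γ : ℝ)
    (hθstar : ‖θstar‖ = 1) (hα0 : 0 ≤ α) (hα1 : α < 1)
    (hγ0 : 0 ≤ γ) (hγ1 : γ ≤ 1)
    (hclose : ‖θtil - θstar‖ ≤ α)
    (hx : ‖x‖ ≤ 1) (hgood : γ * ‖θtil‖ ≤ ⟪x, θtil⟫) :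
    ‖θstar - x‖ ≤
      Real.sqrt (2 + 2 * α * Real.sqrt (1 - γ ^ 2) - 2 * γ * Real.sqrt (1 - α ^ 2)) := by
  have hn : 0 < ‖θtil‖ := by
    have h1 : ‖θstar‖ ≤ ‖θtil‖ + ‖θtil - θstar‖ := by
      have := norm_sub_le θtil (θtil - θstar)
      simpa using this
    linarith
  obtain ⟨u, hu, hun⟩ : ∃ u : EuclideanSpace ℝ (Fin d), ‖u‖ = 1 ∧ θtil = ‖θtil‖ • u := by
    refine ⟨‖θtil‖⁻¹ • θtil, ?_, ?_⟩
    · rw [norm_smul, norm_inv, norm_norm, inv_mul_cancel₀ hn.ne']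
    · rw [smul_smul, mul_inv_cancel₀ hn.ne', one_smul]
  generalize ‖θtil‖ = n at *
  subst hun
  have hc0 : 0 ≤ Real.sqrt (1 - α ^ 2) := Real.sqrt_nonneg _
  have hc2 : Real.sqrt (1 - α ^ 2) ^ 2 = 1 - α ^ 2 := Real.sq_sqrt (by nlinarith)
  generalize Real.sqrt (1 - α ^ 2) = c at *
  have hp : γ ≤ ⟪x, u⟫ := by
    rw [real_inner_smul_right] at hgood
    nlinarith
  have hq : c ≤ ⟪θstar, u⟫ := by
    have h2 : ‖n • u - θstar‖ ^ 2 = n ^ 2 - 2 * (n * ⟪θstar, u⟫) + 1 := by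
      rw [norm_sub_sq_real, norm_smul, hu, hθstar, real_inner_smul_left, real_inner_comm]
      simp
    have h3 : ‖n • u - θstar‖ ^ 2 ≤ α ^ 2 := by gcongr
    have h4 : n * c ≤ n * ⟪θstar, u⟫ := by nlinarith [sq_nonneg (n - c)]
    exact le_of_mul_le_mul_left h4 hn
  have dec : ∀ y z : EuclideanSpace ℝ (Fin d),
      ⟪y - ⟪y, u⟫ • u, z - ⟪z, u⟫ • u⟫ = ⟪y, z⟫ - ⟪y, u⟫ * ⟪z, u⟫ := by
    intro y z
    simp only [inner_sub_left, inner_sub_right, real_inner_smul_left, real_inner_smul_right,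
      real_inner_self_eq_norm_sq, hu, real_inner_comm z u]
    ring
  have hX : ‖x - ⟪x, u⟫ • u‖ ≤ Real.sqrt (1 - γ ^ 2) := by
    apply Real.le_sqrt_of_sq_le
    rw [← real_inner_self_eq_norm_sq, dec, real_inner_self_eq_norm_sq]
    nlinarith [norm_nonneg x]
  have hT : ‖θstar - ⟪θstar, u⟫ • u‖ ≤ α := by
    refine (sq_le_sq₀ (norm_nonneg _) hα0).mp ?_
    rw [← real_inner_self_eq_norm_sq, dec, real_inner_self_eq_norm_sq, hθstar]
    nlinarith
  have hcs := abs_real_inner_le_norm (x - ⟪x, u⟫ • u) (θstar - ⟪θstar, u⟫ • u)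
  rw [dec] at hcs
  have h5 : ‖x - ⟪x, u⟫ • u‖ * ‖θstar - ⟪θstar, u⟫ • u‖ ≤ Real.sqrt (1 - γ ^ 2) * α := by
    gcongr
  have h6 : γ * c ≤ ⟪x, u⟫ * ⟪θstar, u⟫ := by
    apply mul_le_mul hp hq hc0 (hγ0.trans hp)
  have h7 := (abs_le.mp hcs).1
  apply Real.le_sqrt_of_sq_le
  rw [norm_sub_sq_real, hθstar, real_inner_comm]
  nlinarith [norm_nonneg x]
end

section
/- Let 0 < λ ≤ 1 and 0 ≤ γ ≤ 1, and define ψ(λ, γ) := √(λ²/9 − λ⁴/324)·γ − (1 − λ²/18)·√(1−γ²). If 0 ≤ α ≤ ψ(λ, γ) (and α ≤ 1), then λ − 2√(2 + 2α√(1−γ²) − 2γ√(1−α²)) ≥ λ/3. -/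
/-- The threshold `ψ(λ, γ)` of Remark `exchange_alpha`. -/
noncomputable def psi (lam γ : ℝ) : ℝ :=
  Real.sqrt (lam ^ 2 / 9 - lam ^ 4 / 324) * γ - (1 - lam ^ 2 / 18) * Real.sqrt (1 - γ ^ 2)

/-- Whenever `α ≤ ψ(λ, γ)`, the minimum-eigenvalue increment factor
`λ − 2√(2 + 2α√(1−γ²) − 2γ√(1−α²))` is at least `λ/3`. -/
theorem exchange_alpha (lam γ α : ℝ) (hlam0 : 0 < lam) (hlam1 : lam ≤ 1)
    (hγ0 : 0 ≤ γ) (hγ1 : γ ≤ 1) (hα0 : 0 ≤ α) (hαψ : α ≤ psi lam γ) (hα1 : α ≤ 1) :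
    lam / 3 ≤
      lam - 2 * Real.sqrt (2 + 2 * α * Real.sqrt (1 - γ ^ 2) - 2 * γ * Real.sqrt (1 - α ^ 2)) := by
  unfold psi at hαψ
  have hl2 : lam ^ 2 ≤ 1 := by nlinarith
  have hdn : 0 ≤ lam ^ 2 / 9 - lam ^ 4 / 324 := by nlinarith [sq_nonneg lam]
  have hd0 := Real.sqrt_nonneg (lam ^ 2 / 9 - lam ^ 4 / 324)
  have hd2 := Real.sq_sqrt hdn
  have hs0 := Real.sqrt_nonneg (1 - γ ^ 2)
  have hs2 := Real.sq_sqrt (show 0 ≤ 1 - γ ^ 2 by nlinarith)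
  set d := Real.sqrt (lam ^ 2 / 9 - lam ^ 4 / 324)
  set s := Real.sqrt (1 - γ ^ 2)
  obtain ⟨c, hc⟩ : ∃ c, c = 1 - lam ^ 2 / 18 := ⟨_, rfl⟩
  rw [← hc] at hαψ
  have hc0 : 0 ≤ c := by rw [hc]; linarith
  have hdc : d ^ 2 = 1 - c ^ 2 := by rw [hd2, hc]; ring
  have hpq : (d * γ - c * s) ^ 2 + (c * γ + d * s) ^ 2 = 1 := by
    have : (d * γ - c * s) ^ 2 + (c * γ + d * s) ^ 2 = (d ^ 2 + c ^ 2) * (s ^ 2 + γ ^ 2) := by ring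
    rw [this, hdc, hs2]; ring
  have hb : c * γ + d * s ≤ Real.sqrt (1 - α ^ 2) := by
    apply Real.le_sqrt_of_sq_le
    have := pow_le_pow_left₀ hα0 hαψ 2
    linarith
  have h1 := mul_le_mul_of_nonneg_left hb hγ0
  have h2 := mul_le_mul_of_nonneg_right hαψ hs0
  have h3 : γ * (c * γ + d * s) - (d * γ - c * s) * s = c := by
    have : γ * (c * γ + d * s) - (d * γ - c * s) * s = c * (γ ^ 2 + s ^ 2) := by ring
    rw [this, hs2]; ring
  have h4 : Real.sqrt (2 + 2 * α * s - 2 * γ * Real.sqrt (1 - α ^ 2)) ≤ lam / 3 := by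
    apply Real.sqrt_le_iff.mpr
    constructor
    · linarith
    · nlinarith
  linarith
end

section
/- Let θ_1, …, θ_M ∈ ℝ^d be unit vectors such that for every unit vector u ∈ ℝ^d, ∑_{m=1}^M ⟨u, θ_m⟩² ≥ λM (i.e., the smallest eigenvalue of ∑_m θ_m θ_mᵀ is at least λM), where λ > 0. Let 0 ≤ α < 1 and 0 ≤ γ ≤ 1, let θ̃_1, …, θ̃_M ∈ ℝ^d satisfy ‖θ̃_m − θ_m‖ ≤ α for each m, and let x_1, …, x_M ∈ ℝ^d satisfy ‖x_m‖ ≤ 1 and x_m is γ-good for θ̃_m for each m. Then for every unit vector u ∈ ℝ^d, ∑_{m=1}^M ⟨u, x_m⟩² ≥ (λ − 2√(2 + 2α√(1−γ²) − 2γ√(1−α²)))·M; equivalently, the smallest eigenvalue of ∑_m x_m x_mᵀ is at least (λ − 2√(2 + 2α√(1−γ²) − 2γ√(1−α²)))·M. -/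
open scoped RealInnerProductSpace


lemma aux_inner {E : Type*} [NormedAddCommGroup E] [InnerProductSpace ℝ E] (α γ : ℝ)
    (t tt x : E) (ht : ‖t‖ = 1)
    (hα0 : 0 ≤ α) (hα1 : α < 1) (hγ0 : 0 ≤ γ)
    (hest : ‖tt - t‖ ≤ α) (hxn : ‖x‖ ≤ 1) (hgood : γ * ‖tt‖ ≤ ⟪x, tt⟫) :
    γ * Real.sqrt (1 - α ^ 2) - α * Real.sqrt (1 - γ ^ 2) ≤ ⟪x, t⟫ := by
  have hn : 0 < ‖tt‖ := by
    have h1 : ‖t‖ ≤ ‖tt‖ + ‖tt - t‖ := by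
      have := norm_sub_le tt (tt - t)
      simpa using this
    linarith
  set c := Real.sqrt (1 - α ^ 2) with hc
  have hc0 : 0 ≤ c := Real.sqrt_nonneg _
  have hc2 : c ^ 2 = 1 - α ^ 2 := Real.sq_sqrt (by nlinarith)
  obtain ⟨w, hw, hwn⟩ : ∃ w : E, tt = ‖tt‖ • w ∧ ‖w‖ = 1 := by
    refine ⟨‖tt‖⁻¹ • tt, ?_, ?_⟩
    · rw [smul_smul, mul_inv_cancel₀ hn.ne', one_smul]
    · rw [norm_smul, norm_inv, norm_norm, inv_mul_cancel₀ hn.ne']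
  have ha : γ ≤ ⟪x, w⟫ := by
    rw [hw, inner_smul_right, ← hw] at hgood
    nlinarith
  have hb : c ≤ ⟪t, w⟫ := by
    have h1 : ‖tt - t‖ ^ 2 ≤ α ^ 2 := by gcongr
    rw [norm_sub_sq_real, ht, real_inner_comm] at h1
    have h2 : ⟪t, tt⟫ = ‖tt‖ * ⟪t, w⟫ := by
      conv_lhs => rw [hw]
      rw [inner_smul_right]
    rw [h2] at h1
    have h3 : 0 ≤ ‖tt‖ * (⟪t, w⟫ - c) := by nlinarith [sq_nonneg (‖tt‖ - c)]
    have := nonneg_of_mul_nonneg_right h3 hn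
    linarith
  set a := ⟪x, w⟫ with hadef
  set b := ⟪t, w⟫ with hbdef
  have hww : ⟪w, w⟫ = 1 := by rw [real_inner_self_eq_norm_sq, hwn]; norm_num
  have hx' : ‖x - a • w‖ ^ 2 = ‖x‖ ^ 2 - a ^ 2 := by
    rw [norm_sub_sq_real, inner_smul_right, norm_smul, hwn, mul_one, Real.norm_eq_abs, sq_abs,
      ← hadef]
    ring
  have ht' : ‖t - b • w‖ ^ 2 = 1 - b ^ 2 := by
    rw [norm_sub_sq_real, inner_smul_right, norm_smul, hwn, mul_one, Real.norm_eq_abs, sq_abs,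
      ← hbdef, ht]
    ring
  have hin : ⟪x - a • w, t - b • w⟫ = ⟪x, t⟫ - a * b := by
    simp only [inner_sub_left, inner_sub_right, inner_smul_left, inner_smul_right, hww,
      ← hadef, RCLike.conj_to_real]
    have hwt : ⟪w, t⟫ = b := by rw [hbdef, real_inner_comm]
    rw [hwt]
    ring
  have h1 : ‖x - a • w‖ ≤ Real.sqrt (1 - γ ^ 2) := by
    apply Real.le_sqrt_of_sq_le
    have : ‖x‖ ^ 2 ≤ 1 := by nlinarith [norm_nonneg x]
    nlinarith
  have h2 : ‖t - b • w‖ ≤ α := by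
    apply le_of_sq_le_sq _ hα0
    nlinarith
  have h3 := neg_le_of_abs_le (abs_real_inner_le_norm (x - a • w) (t - b • w))
  have h4 : ‖x - a • w‖ * ‖t - b • w‖ ≤ Real.sqrt (1 - γ ^ 2) * α := by gcongr
  have h5 : γ * c ≤ a * b := by gcongr; linarith
  rw [hin] at h3
  linarith

/-- Increment of the minimum eigenvalue of the Gram matrix over one round-robin cycle:
if for each objective `m` a `γ`-good arm for an `α`-accurate estimate `θtil m` of the unit
objective `θ m` is selected, then the Gram matrix quadratic form of the selected arms in
any unit direction is at least `(λ − 2√(2 + 2α√(1−γ²) − 2γ√(1−α²)))·M`. -/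
theorem mineigen_onecycle (d M : ℕ) (lam α γ : ℝ) (hlam : 0 < lam)
    (θ θtil x : Fin M → EuclideanSpace ℝ (Fin d))
    (hθunit : ∀ m, ‖θ m‖ = 1)
    (hθlam : ∀ u : EuclideanSpace ℝ (Fin d), ‖u‖ = 1 → lam * M ≤ ∑ m, ⟪u, θ m⟫ ^ 2)
    (hα0 : 0 ≤ α) (hα1 : α < 1) (hγ0 : 0 ≤ γ) (hγ1 : γ ≤ 1)
    (hest : ∀ m, ‖θtil m - θ m‖ ≤ α)
    (hxn : ∀ m, ‖x m‖ ≤ 1)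
    (hgood : ∀ m, γ * ‖θtil m‖ ≤ ⟪x m, θtil m⟫) :
    ∀ u : EuclideanSpace ℝ (Fin d), ‖u‖ = 1 →
      (lam - 2 * Real.sqrt (2 + 2 * α * Real.sqrt (1 - γ ^ 2)
        - 2 * γ * Real.sqrt (1 - α ^ 2))) * M ≤ ∑ m, ⟪u, x m⟫ ^ 2 := by
  intro u hu
  set R := Real.sqrt (2 + 2 * α * Real.sqrt (1 - γ ^ 2) - 2 * γ * Real.sqrt (1 - α ^ 2)) with hR
  have key : ∀ m, ⟪u, θ m⟫ ^ 2 - 2 * R ≤ ⟪u, x m⟫ ^ 2 := by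
    intro m
    have h := aux_inner α γ (θ m) (θtil m) (x m) (hθunit m) hα0 hα1 hγ0 (hest m) (hxn m) (hgood m)
    have h1 : ‖θ m - x m‖ ≤ R := by
      apply Real.le_sqrt_of_sq_le
      rw [norm_sub_sq_real, hθunit m, real_inner_comm]
      nlinarith [norm_nonneg (x m), hxn m]
    have h2 : |⟪u, θ m - x m⟫| ≤ R := by
      have := abs_real_inner_le_norm u (θ m - x m)
      rw [hu, one_mul] at this
      linarith
    have h3 : |⟪u, θ m + x m⟫| ≤ 2 := by
      have := abs_real_inner_le_norm u (θ m + x m)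
      rw [hu, one_mul] at this
      linarith [norm_add_le (θ m) (x m), hθunit m, hxn m]
    have h4 : ⟪u, θ m⟫ ^ 2 - ⟪u, x m⟫ ^ 2 = ⟪u, θ m - x m⟫ * ⟪u, θ m + x m⟫ := by
      rw [inner_sub_right, inner_add_right]; ring
    have h5 : ⟪u, θ m - x m⟫ * ⟪u, θ m + x m⟫ ≤ R * 2 := by
      refine (le_abs_self _).trans ?_
      rw [abs_mul]
      exact mul_le_mul h2 h3 (abs_nonneg _) (Real.sqrt_nonneg _)
    linarith
  have hs := Finset.sum_le_sum (fun m (_ : m ∈ Finset.univ) => key m)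
  rw [Finset.sum_sub_distrib, Finset.sum_const, Finset.card_univ, Fintype.card_fin,
    nsmul_eq_mul] at hs
  have := hθlam u hu
  linarith
end
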